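/- For every m ∈ ℕ₀ there exist p ∈ ℕ and a constant c_m < ∞ (depending only on m and the dimension d) such that for all Schwartz functions φ on ℝ^d, ‖φ‖_m^* ≤ c_m ‖φ‖_{H_p}, where ‖φ‖_m^* = max_{|α|≤m} sup_x |(1+|x|²)^{m/2} ∂^α φ(x)| and ‖φ‖_{H_p} = (∑_{k∈ℕ^d} (⟨k⟩^{p/d} (φ, h_k)_{L²})²)^{1/2} with (h_k) the Hermite functions; conversely for every p there exist m and c_p with ‖φ‖_{H_p} ≤ c_p ‖φ‖_m^*. -/

import Mathlib

open MeasureTheory Filter Topology ENNReal NNReal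

/-- The standard Gaussian density on `ℝ`. -/
noncomputable def gaussD : ℝ → ℝ :=
  fun x => (Real.sqrt (2 * Real.pi))⁻¹ * Real.exp (-(x ^ 2) / 2)

/-- The one-dimensional Hermite functions
`h_k(x) = ((-1)^k / √k!) g(x)^{-1/2} (d/dx)^k g(x)`. -/
noncomputable def hermiteFn (k : ℕ) (x : ℝ) : ℝ :=
  ((-1 : ℝ) ^ k / Real.sqrt (Nat.factorial k)) * gaussD x ^ (-(1 / 2 : ℝ)) *
    iteratedDeriv k gaussD x

/-- The `d`-dimensional Hermite functions `h_k(x) = ∏ᵢ h_{kᵢ}(xᵢ)`. -/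
noncomputable def hermiteFnD {d : ℕ} (k : Fin d → ℕ)
    (x : EuclideanSpace ℝ (Fin d)) : ℝ :=
  ∏ i, hermiteFn (k i) (x i)

/-- The Hermite coefficient `φ_k^# = (φ, h_k)_{L²}` of a Schwartz function. -/
noncomputable def hermiteCoeff {d : ℕ}
    (φ : SchwartzMap (EuclideanSpace ℝ (Fin d)) ℝ) (k : Fin d → ℕ) : ℝ :=
  ∫ x, φ x * hermiteFnD k x

/-- The Hermite–Sobolev norm `‖φ‖_{H_p} = (∑_k (⟨k⟩^{p/d} φ_k^#)²)^{1/2}` with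
`⟨k⟩ = (1 + |k|²)^{1/2}`. -/
noncomputable def hermiteSobolevNorm {d : ℕ} (p : ℝ)
    (φ : SchwartzMap (EuclideanSpace ℝ (Fin d)) ℝ) : ℝ :=
  Real.sqrt (∑' k : Fin d → ℕ,
    ((1 + ∑ i, ((k i : ℝ)) ^ 2) ^ (p / (2 * d)) * hermiteCoeff φ k) ^ 2)

/-- Partial derivative in the `i`-th coordinate direction. -/
noncomputable def coordDeriv {d : ℕ} (i : Fin d)
    (f : EuclideanSpace ℝ (Fin d) → ℝ) : EuclideanSpace ℝ (Fin d) → ℝ :=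
  fun x => fderiv ℝ f x (EuclideanSpace.single i 1)

/-- Iterated partial derivative `∂ᵢⁿ` in one coordinate direction. -/
noncomputable def coordDerivPow {d : ℕ} (i : Fin d) :
    ℕ → (EuclideanSpace ℝ (Fin d) → ℝ) → EuclideanSpace ℝ (Fin d) → ℝ
  | 0, f => f
  | n + 1, f => coordDeriv i (coordDerivPow i n f)

/-- The multi-index partial derivative `∂^α = ∂₁^{α₁} ⋯ ∂_d^{α_d}`. -/
noncomputable def multiDeriv {d : ℕ} (α : Fin d → ℕ)
    (f : EuclideanSpace ℝ (Fin d) → ℝ) : EuclideanSpace ℝ (Fin d) → ℝ :=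
  (List.finRange d).foldr (fun i g => coordDerivPow i (α i) g) f

/-- The classical Schwartz seminorms
`‖φ‖_m^* = max_{|α|≤m} sup_x |(1+|x|²)^{m/2} ∂^α φ(x)|`. -/
noncomputable def schwartzStarSeminorm {d : ℕ} (m : ℕ)
    (φ : SchwartzMap (EuclideanSpace ℝ (Fin d)) ℝ) : ℝ :=
  ⨆ α : {α : Fin d → ℕ // ∑ i, α i ≤ m}, ⨆ x : EuclideanSpace ℝ (Fin d),
    (1 + ‖x‖ ^ 2) ^ ((m : ℝ) / 2) * |multiDeriv α.1 (fun y => φ y) x|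

/-!
The annihilation and creation operators `a_i = x_i / 2 + ∂_i` and `a_i† = x_i / 2 - ∂_i` lower and
raise the index of a Hermite function, so the number operator `N = 1 + ∑ i, a_i† a_i` multiplies
the coefficient at `k` by `1 + |k|₁`. By Bessel's inequality `‖φ‖_{H_p} ≤ ‖N^p φ‖_{L²}`, and
`N^p : S → L²` is continuous; this bounds the Hermite–Sobolev norms by the classical seminorms.

Conversely, `x_i = a_i + a_i†` and `∂_i = (a_i - a_i†) / 2` preserve polynomial decay of the Hermite
coefficients up to a loss of order, so it suffices to bound `sup |φ|` by weighted coefficients of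
`φ`. Since `‖h_k‖_∞` grows polynomially, the Hermite expansion of `φ` converges uniformly, and its
limit is `φ` by completeness: if `f` is bounded, continuous and orthogonal to every `h_k`, then all
moments of `f h_0` vanish, hence so does its Fourier transform, which is given by its exponential
series because `h_0` is a Gaussian.
-/

namespace HermiteSobolev

section OneDimensional

open Polynomial

lemma derivative_hermite_succ (n : ℕ) :
    derivative (hermite (n + 1)) = ((n + 1 : ℕ) : ℤ[X]) * hermite n := by
  induction n with
  | zero => simp
  | succ n ih =>
    rw [hermite_succ (n + 1), derivative_sub, derivative_mul, ih, derivative_mul, hermite_succ n]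
    simp only [derivative_X, derivative_natCast]
    push_cast
    ring

lemma derivative_hermite (n : ℕ) : derivative (hermite n) = (n : ℤ[X]) * hermite (n - 1) := by
  cases n with
  | zero => simp
  | succ n => exact derivative_hermite_succ n

lemma hasDerivAt_aeval_hermite (k : ℕ) (x : ℝ) :
    HasDerivAt (fun y : ℝ => aeval y (hermite k)) (k * aeval x (hermite (k - 1))) x := by
  simpa [derivative_hermite] using (hermite k).hasDerivAt_aeval x

lemma aeval_hermite_succ (k : ℕ) (x : ℝ) :
    aeval x (hermite (k + 1)) = x * aeval x (hermite k) - k * aeval x (hermite (k - 1)) := by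
  simp [hermite_succ, derivative_hermite]

lemma gaussD_pos (x : ℝ) : 0 < gaussD x := by
  unfold gaussD
  positivity

lemma gaussD_eq_gaussianPDFReal : gaussD = ProbabilityTheory.gaussianPDFReal 0 1 := by
  ext x
  simp [gaussD, ProbabilityTheory.gaussianPDFReal]

lemma hasDerivAt_gaussD (x : ℝ) : HasDerivAt gaussD (-x * gaussD x) x := by
  have h := (((hasDerivAt_pow 2 x).neg.div_const 2).exp).const_mul (Real.sqrt (2 * Real.pi))⁻¹
  refine h.congr_deriv ?_
  simp only [gaussD, Nat.cast_ofNat, Pi.neg_apply]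
  ring

lemma hasDerivAt_sqrt_gaussD (x : ℝ) :
    HasDerivAt (fun y => √(gaussD y)) (-x / 2 * √(gaussD x)) x := by
  refine ((hasDerivAt_gaussD x).sqrt (gaussD_pos x).ne').congr_deriv ?_
  have hpos : 0 < √(gaussD x) := Real.sqrt_pos.2 (gaussD_pos x)
  rw [div_eq_iff (by positivity)]
  linear_combination x * Real.mul_self_sqrt (gaussD_pos x).le

lemma integrable_aeval_mul_exp_neg_mul_sq {R : Type*} [CommSemiring R] [Algebra R ℝ] (p : R[X])
    {b : ℝ} (hb : 0 < b) : Integrable fun x : ℝ => aeval x p * Real.exp (-b * x ^ 2) := by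
  induction p using Polynomial.induction_on' with
  | add p q hp hq => exact (hp.add hq).congr (.of_forall fun x => by simp [add_mul])
  | monomial n a =>
    have hn : (-1 : ℝ) < n := neg_one_lt_zero.trans_le n.cast_nonneg
    simpa [aeval_monomial, mul_assoc] using
      (integrable_rpow_mul_exp_neg_mul_sq hb hn).const_mul (algebraMap R ℝ a)

lemma iteratedDeriv_gaussD (k : ℕ) (x : ℝ) :
    iteratedDeriv k gaussD x = (-1) ^ k * aeval x (hermite k) * gaussD x := by
  have h := deriv_gaussian_eq_hermite_mul_gaussian k x
  have hg : gaussD = fun x => (√(2 * Real.pi))⁻¹ * (fun y => Real.exp (-(y ^ 2 / 2))) x := by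
    ext x
    simp [gaussD, neg_div]
  rw [hg, iteratedDeriv_const_mul_field, iteratedDeriv_eq_iterate, h]
  ring

lemma hermiteFn_eq (k : ℕ) (x : ℝ) :
    hermiteFn k x = aeval x (hermite k) / √k.factorial * √(gaussD x) := by
  have hsqrt : gaussD x ^ (-(1 / 2 : ℝ)) * gaussD x = √(gaussD x) := by
    rw [Real.sqrt_eq_rpow, ← Real.rpow_add_one (gaussD_pos x).ne']
    norm_num
  have hsign : ((-1 : ℝ) ^ k) * (-1) ^ k = 1 := by rw [← mul_pow]; norm_num
  rw [hermiteFn, iteratedDeriv_gaussD, ← hsqrt]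
  linear_combination (aeval x (hermite k) / √k.factorial *
    (gaussD x ^ (-(1 / 2 : ℝ)) * gaussD x)) * hsign

lemma hermiteFn_zero (x : ℝ) : hermiteFn 0 x = √(gaussD x) := by
  simp [hermiteFn_eq]

lemma sqrt_factorial_succ (k : ℕ) : √(k + 1).factorial = √(k + 1) * √k.factorial := by
  rw [Nat.factorial_succ, Nat.cast_mul, Real.sqrt_mul (by positivity), Nat.cast_add_one]

lemma sqrt_mul_hermiteFn_succ (k : ℕ) (x : ℝ) :
    √(k + 1) * hermiteFn (k + 1) x =
      aeval x (hermite (k + 1)) / √k.factorial * √(gaussD x) := by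
  rw [hermiteFn_eq, sqrt_factorial_succ]
  field_simp

lemma sqrt_mul_hermiteFn_pred (k : ℕ) (x : ℝ) :
    √k * hermiteFn (k - 1) x =
      k * aeval x (hermite (k - 1)) / √k.factorial * √(gaussD x) := by
  cases k with
  | zero => simp
  | succ n =>
    have hsq : √((n : ℝ) + 1) ^ 2 = n + 1 := Real.sq_sqrt (by positivity)
    rw [hermiteFn_eq, sqrt_factorial_succ, Nat.add_sub_cancel, Nat.cast_add_one]
    field_simp
    rw [hsq]

lemma mul_hermiteFn (k : ℕ) (x : ℝ) :
    x * hermiteFn k x = √(k + 1) * hermiteFn (k + 1) x + √k * hermiteFn (k - 1) x := by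
  rw [sqrt_mul_hermiteFn_succ, sqrt_mul_hermiteFn_pred, hermiteFn_eq, aeval_hermite_succ]
  ring

lemma hasDerivAt_hermiteFn (k : ℕ) (x : ℝ) :
    HasDerivAt (hermiteFn k) ((√k * hermiteFn (k - 1) x - √(k + 1) * hermiteFn (k + 1) x) / 2)
      x := by
  have h := ((hasDerivAt_aeval_hermite k x).div_const √k.factorial).mul (hasDerivAt_sqrt_gaussD x)
  refine (h.congr_deriv ?_).congr_of_eventuallyEq (.of_forall (hermiteFn_eq k))
  rw [sqrt_mul_hermiteFn_succ, sqrt_mul_hermiteFn_pred, aeval_hermite_succ]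
  ring

@[fun_prop]
lemma continuous_hermiteFn (k : ℕ) : Continuous (hermiteFn k) :=
  continuous_iff_continuousAt.2 fun x => (hasDerivAt_hermiteFn k x).continuousAt

lemma hermiteFn_zero_pos (x : ℝ) : 0 < hermiteFn 0 x := by
  rw [hermiteFn_zero]
  exact Real.sqrt_pos.2 (gaussD_pos x)

lemma integrable_hermiteFn_mul (j k : ℕ) : Integrable fun x => hermiteFn j x * hermiteFn k x := by
  have h := (integrable_aeval_mul_exp_neg_mul_sq (hermite j * hermite k) one_half_pos).const_mul
    ((√j.factorial * √k.factorial)⁻¹ * (√(2 * Real.pi))⁻¹)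
  refine h.congr (.of_forall fun x => ?_)
  have hg := Real.mul_self_sqrt (gaussD_pos x).le
  have hexp : gaussD x = (√(2 * Real.pi))⁻¹ * Real.exp (-(1 / 2) * x ^ 2) := by
    simp only [gaussD]
    ring_nf
  simp only [hermiteFn_eq, map_mul]
  linear_combination (-aeval x (hermite j) * aeval x (hermite k) /
    (√j.factorial * √k.factorial)) * (hg.trans hexp)

lemma memLp_hermiteFn (k : ℕ) : MemLp (hermiteFn k) 2 := by
  rw [memLp_two_iff_integrable_sq (continuous_hermiteFn k).aestronglyMeasurable]
  simpa only [sq] using integrable_hermiteFn_mul k k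

lemma hasDerivAt_hermiteFn_mul (j k : ℕ) (x : ℝ) :
    HasDerivAt (fun y => hermiteFn j y * hermiteFn k y)
      (√j * (hermiteFn (j - 1) x * hermiteFn k x) -
        √(k + 1) * (hermiteFn j x * hermiteFn (k + 1) x)) x := by
  refine ((hasDerivAt_hermiteFn j x).mul (hasDerivAt_hermiteFn k x)).congr_deriv ?_
  linear_combination (hermiteFn k x * mul_hermiteFn j x - hermiteFn j x * mul_hermiteFn k x) / 2

lemma sqrt_mul_integral_hermiteFn_mul_succ (j k : ℕ) :
    √(k + 1) * ∫ x, hermiteFn j x * hermiteFn (k + 1) x =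
      √j * ∫ x, hermiteFn (j - 1) x * hermiteFn k x := by
  have hl := (integrable_hermiteFn_mul (j - 1) k).const_mul √j
  have hr := (integrable_hermiteFn_mul j (k + 1)).const_mul √(k + 1)
  have h := integral_eq_zero_of_hasDerivAt_of_integrable (hasDerivAt_hermiteFn_mul j k)
    (hl.sub hr) (integrable_hermiteFn_mul j k)
  rw [integral_sub hl hr, integral_const_mul, integral_const_mul] at h
  exact (sub_eq_zero.1 h).symm

lemma integral_hermiteFn_zero_mul_self : ∫ x, hermiteFn 0 x * hermiteFn 0 x = 1 := by
  simp_rw [hermiteFn_zero, Real.mul_self_sqrt (gaussD_pos _).le, gaussD_eq_gaussianPDFReal]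
  exact ProbabilityTheory.integral_gaussianPDFReal_eq_one 0 one_ne_zero

lemma integral_hermiteFn_mul (j k : ℕ) :
    ∫ x, hermiteFn j x * hermiteFn k x = if j = k then 1 else 0 := by
  have hsqrt (n : ℕ) : √((n : ℝ) + 1) ≠ 0 := by positivity
  have hzero (k : ℕ) : ∫ x, hermiteFn 0 x * hermiteFn (k + 1) x = 0 := by
    simpa [hsqrt] using sqrt_mul_integral_hermiteFn_mul_succ 0 k
  induction k generalizing j with
  | zero =>
    cases j with
    | zero => simpa using integral_hermiteFn_zero_mul_self
    | succ j => simpa [mul_comm] using hzero j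
  | succ k ih =>
    cases j with
    | zero => simpa using hzero k
    | succ j =>
      have h := sqrt_mul_integral_hermiteFn_mul_succ (j + 1) k
      rw [Nat.add_sub_cancel, ih, Nat.cast_add_one] at h
      refine mul_left_cancel₀ (hsqrt k) (h.trans ?_)
      by_cases hjk : j = k <;> simp [hjk]

lemma sq_le_integral_sq_add_integral_deriv_sq {f f' : ℝ → ℝ} (hf : ∀ x, HasDerivAt f (f' x) x)
    (hf2 : MemLp f 2) (hf'2 : MemLp f' 2) (x : ℝ) :
    f x ^ 2 ≤ (∫ y, f y ^ 2) + ∫ y, f' y ^ 2 := by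
  have hderiv (y : ℝ) : HasDerivAt (fun z => f z ^ 2) (2 * (f y * f' y)) y :=
    ((hf y).pow 2).congr_deriv (by simp only [Nat.cast_ofNat]; ring)
  have hint : Integrable fun y => 2 * (f y * f' y) := (hf2.integrable_mul hf'2).const_mul 2
  have htend : Tendsto (fun y => f y ^ 2) atBot (𝓝 0) :=
    tendsto_zero_of_hasDerivAt_of_integrableOn_Iic (a := x) (fun y _ => hderiv y)
      hint.integrableOn hf2.integrable_sq.integrableOn
  have hFTC := integral_Iic_of_hasDerivAt_of_tendsto' (a := x) (fun y _ => hderiv y)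
    hint.integrableOn htend
  have hsum : Integrable fun y => f y ^ 2 + f' y ^ 2 := hf2.integrable_sq.add hf'2.integrable_sq
  calc f x ^ 2 = ∫ y in Set.Iic x, 2 * (f y * f' y) := by rw [hFTC, sub_zero]
    _ ≤ ∫ y in Set.Iic x, f y ^ 2 + f' y ^ 2 :=
      setIntegral_mono hint.integrableOn hsum.integrableOn fun y => by
        nlinarith [sq_nonneg (f y - f' y)]
    _ ≤ ∫ y, f y ^ 2 + f' y ^ 2 :=
      setIntegral_le_integral hsum (.of_forall fun y => by positivity)
    _ = _ := integral_add hf2.integrable_sq hf'2.integrable_sq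

lemma integral_hermiteFn_sq (k : ℕ) : ∫ x, hermiteFn k x ^ 2 = 1 := by
  simpa [sq] using integral_hermiteFn_mul k k

lemma abs_hermiteFn_le (k : ℕ) (x : ℝ) : |hermiteFn k x| ≤ 2 * (k + 1) := by
  have hl : MemLp (fun y => √k * hermiteFn (k - 1) y) 2 := (memLp_hermiteFn (k - 1)).const_mul √k
  have hr : MemLp (fun y => √(k + 1) * hermiteFn (k + 1) y) 2 :=
    (memLp_hermiteFn (k + 1)).const_mul √(k + 1)
  have hderiv : MemLp
      (fun y => (√k * hermiteFn (k - 1) y - √(k + 1) * hermiteFn (k + 1) y) / 2) 2 := by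
    simp_rw [div_eq_inv_mul]
    exact (hl.sub hr).const_mul 2⁻¹
  have hbound : ∫ y, ((√k * hermiteFn (k - 1) y - √(k + 1) * hermiteFn (k + 1) y) / 2) ^ 2 ≤
      2 * (k : ℝ) + 1 := by
    calc _ ≤ ∫ y, (√k * hermiteFn (k - 1) y) ^ 2 + (√(k + 1) * hermiteFn (k + 1) y) ^ 2 :=
          integral_mono hderiv.integrable_sq (hl.integrable_sq.add hr.integrable_sq) fun y => by
            nlinarith [sq_nonneg (√k * hermiteFn (k - 1) y + √(k + 1) * hermiteFn (k + 1) y),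
              sq_nonneg (√k * hermiteFn (k - 1) y), sq_nonneg (√(k + 1) * hermiteFn (k + 1) y)]
      _ = k + (k + 1) := by
          rw [integral_add hl.integrable_sq hr.integrable_sq]
          simp only [mul_pow, integral_const_mul, integral_hermiteFn_sq, mul_one]
          rw [Real.sq_sqrt k.cast_nonneg, Real.sq_sqrt (by positivity)]
      _ = 2 * k + 1 := by ring
  have hsq := sq_le_integral_sq_add_integral_deriv_sq (hasDerivAt_hermiteFn k)
    (memLp_hermiteFn k) hderiv x
  rw [integral_hermiteFn_sq] at hsq
  refine abs_le_of_sq_le_sq ?_ (by positivity)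
  nlinarith [k.cast_nonneg (α := ℝ)]

end OneDimensional

/-- The domain `ℝ^d` of the Hermite functions. -/
abbrev Space (d : ℕ) := EuclideanSpace ℝ (Fin d)

section HermiteFunctions

variable {d : ℕ}

lemma hermiteFnD_eq_mul_prod_erase {j k : Fin d → ℕ} {i : Fin d} (h : ∀ l ≠ i, j l = k l)
    (x : Space d) :
    hermiteFnD j x =
      hermiteFn (j i) (x i) * ∏ l ∈ Finset.univ.erase i, hermiteFn (k l) (x l) := by
  rw [hermiteFnD, ← Finset.mul_prod_erase Finset.univ _ (Finset.mem_univ i)]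
  congr 1
  exact Finset.prod_congr rfl fun l hl => by rw [h l (Finset.ne_of_mem_erase hl)]

lemma hermiteFnD_add_single (i : Fin d) (k : Fin d → ℕ) (x : Space d) :
    hermiteFnD (k + Pi.single i 1) x =
      hermiteFn (k i + 1) (x i) * ∏ l ∈ Finset.univ.erase i, hermiteFn (k l) (x l) := by
  rw [hermiteFnD_eq_mul_prod_erase (k := k) (i := i) (fun l hl => by simp [hl])]
  simp

lemma hermiteFnD_sub_single (i : Fin d) (k : Fin d → ℕ) (x : Space d) :
    hermiteFnD (k - Pi.single i 1) x =
      hermiteFn (k i - 1) (x i) * ∏ l ∈ Finset.univ.erase i, hermiteFn (k l) (x l) := by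
  rw [hermiteFnD_eq_mul_prod_erase (k := k) (i := i) (fun l hl => by simp [hl])]
  simp

lemma coord_mul_hermiteFnD (i : Fin d) (k : Fin d → ℕ) (x : Space d) :
    x i * hermiteFnD k x =
      √(k i + 1) * hermiteFnD (k + Pi.single i 1) x +
        √(k i) * hermiteFnD (k - Pi.single i 1) x := by
  rw [hermiteFnD_add_single, hermiteFnD_sub_single,
    hermiteFnD_eq_mul_prod_erase (i := i) (fun _ _ => rfl)]
  linear_combination (∏ l ∈ Finset.univ.erase i, hermiteFn (k l) (x l)) * mul_hermiteFn (k i) (x i)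

@[fun_prop]
lemma differentiable_hermiteFnD (k : Fin d → ℕ) : Differentiable ℝ (hermiteFnD k) := by
  have h (n : ℕ) : Differentiable ℝ (hermiteFn n) := fun x =>
    (hasDerivAt_hermiteFn n x).differentiableAt
  unfold hermiteFnD
  fun_prop

@[fun_prop]
lemma continuous_hermiteFnD (k : Fin d → ℕ) : Continuous (hermiteFnD k) :=
  (differentiable_hermiteFnD k).continuous

lemma fderiv_hermiteFnD_single (i : Fin d) (k : Fin d → ℕ) (x : Space d) :
    fderiv ℝ (hermiteFnD k) x (EuclideanSpace.single i 1) =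
      (√(k i) * hermiteFnD (k - Pi.single i 1) x -
        √(k i + 1) * hermiteFnD (k + Pi.single i 1) x) / 2 := by
  have hline (t : ℝ) : hermiteFnD k (x + t • EuclideanSpace.single i (1 : ℝ)) =
      hermiteFn (k i) (x i + t) * ∏ l ∈ Finset.univ.erase i, hermiteFn (k l) (x l) := by
    rw [hermiteFnD_eq_mul_prod_erase (i := i) (fun _ _ => rfl)]
    congr 1
    · simp
    · exact Finset.prod_congr rfl fun l hl => by simp [Finset.ne_of_mem_erase hl]
  have h := (HasDerivAt.comp_const_add (x i) 0
    (hasDerivAt_hermiteFn (k i) (x i + 0))).mul_const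
    (∏ l ∈ Finset.univ.erase i, hermiteFn (k l) (x l))
  rw [← (differentiable_hermiteFnD k x).lineDeriv_eq_fderiv, lineDeriv, funext hline, h.deriv,
    hermiteFnD_add_single, hermiteFnD_sub_single, add_zero]
  ring

lemma hermiteFnD_zero_pos (x : Space d) : 0 < hermiteFnD 0 x :=
  Finset.prod_pos fun i _ => hermiteFn_zero_pos (x i)

lemma integral_prod_coord (f : Fin d → ℝ → ℝ) :
    ∫ x : Space d, ∏ i, f i (x i) = ∏ i, ∫ t, f i t := by
  rw [← integral_fintype_prod_volume_eq_prod]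
  exact (EuclideanSpace.volume_preserving_symm_measurableEquiv_toLp (Fin d)).integral_comp'
    (fun x : Fin d → ℝ => ∏ i, f i (x i))

lemma integrable_prod_coord {f : Fin d → ℝ → ℝ} (hf : ∀ i, Integrable (f i)) :
    Integrable fun x : Space d => ∏ i, f i (x i) :=
  (EuclideanSpace.volume_preserving_symm_measurableEquiv_toLp (Fin d)).integrable_comp_emb
    (MeasurableEquiv.measurableEmbedding _) |>.2 (Integrable.fintype_prod hf)

lemma memLp_hermiteFnD (k : Fin d → ℕ) : MemLp (hermiteFnD k) 2 := by
  rw [memLp_two_iff_integrable_sq (continuous_hermiteFnD k).aestronglyMeasurable]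
  simpa only [hermiteFnD, ← Finset.prod_pow] using
    integrable_prod_coord fun i => (memLp_hermiteFn (k i)).integrable_sq

lemma integral_hermiteFnD_mul (j k : Fin d → ℕ) :
    ∫ x, hermiteFnD j x * hermiteFnD k x = if j = k then 1 else 0 := by
  have h := integral_prod_coord fun i t => hermiteFn (j i) t * hermiteFn (k i) t
  simp only [Finset.prod_mul_distrib, integral_hermiteFn_mul] at h
  simp only [hermiteFnD, h, Finset.prod_ite_zero, Finset.mem_univ, true_imp_iff, funext_iff,
    Finset.prod_const_one]

end HermiteFunctions

section Weight

variable {ι : Type*} [Fintype ι]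

/-- The weight `1 + |k|₁` of a multi-index, the eigenvalue of the number operator on `h_k`. -/
def weight (k : ι → ℕ) : ℝ := 1 + ∑ i, (k i : ℝ)

lemma one_le_weight (k : ι → ℕ) : 1 ≤ weight k :=
  le_add_of_nonneg_right (Finset.sum_nonneg fun i _ => (k i).cast_nonneg)

lemma weight_pos (k : ι → ℕ) : 0 < weight k := zero_lt_one.trans_le (one_le_weight k)

lemma coord_add_one_le_weight (k : ι → ℕ) (i : ι) : (k i : ℝ) + 1 ≤ weight k := by
  have h := Finset.single_le_sum (f := fun i => (k i : ℝ)) (fun i _ => (k i).cast_nonneg)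
    (Finset.mem_univ i)
  rw [weight]
  linarith

lemma weight_add_single [DecidableEq ι] (k : ι → ℕ) (i : ι) :
    weight (k + Pi.single i 1) = weight k + 1 := by
  simp [weight, Finset.sum_add_distrib, Pi.single_apply, add_assoc]

lemma summable_prod_apply {κ : Type*} {f : ι → κ → ℝ} (hf : ∀ i, Summable (f i))
    (hf0 : ∀ i n, 0 ≤ f i n) : Summable fun k : ι → κ => ∏ i, f i (k i) := by
  classical
  refine summable_of_sum_le (c := ∏ i, ∑' n, f i n)
    (fun k => Finset.prod_nonneg fun i _ => hf0 i (k i)) fun u => ?_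
  have hsub : u ⊆ Fintype.piFinset fun i => u.image fun k => k i := fun k hk =>
    Fintype.mem_piFinset.2 fun i => Finset.mem_image_of_mem (fun k => k i) hk
  calc ∑ k ∈ u, ∏ i, f i (k i)
      ≤ ∑ k ∈ Fintype.piFinset fun i => u.image fun k => k i, ∏ i, f i (k i) :=
        Finset.sum_le_sum_of_subset_of_nonneg hsub fun k _ _ =>
          Finset.prod_nonneg fun i _ => hf0 i (k i)
    _ = ∏ i, ∑ n ∈ u.image fun k => k i, f i n := (Finset.prod_univ_sum _ _).symm
    _ ≤ ∏ i, ∑' n, f i n := Finset.prod_le_prod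
        (fun i _ => Finset.sum_nonneg fun n _ => hf0 i n)
        fun i _ => (hf i).sum_le_tsum _ fun n _ => hf0 i n

lemma summable_inv_weight_pow :
    Summable fun k : ι → ℕ => (weight k ^ (2 * Fintype.card ι))⁻¹ := by
  have hs : Summable fun n : ℕ => (((n : ℝ) + 1) ^ 2)⁻¹ := by
    simpa using (_root_.summable_nat_add_iff 1).2 (Real.summable_nat_pow_inv.2 one_lt_two)
  refine .of_nonneg_of_le (fun k => inv_nonneg.2 (pow_nonneg (weight_pos k).le _)) (fun k => ?_)
    (summable_prod_apply (fun _ : ι => hs) fun _ _ => by positivity)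
  calc (weight k ^ (2 * Fintype.card ι))⁻¹ = ∏ _i : ι, (weight k ^ 2)⁻¹ := by
        simp [pow_mul]
    _ ≤ ∏ i, (((k i : ℝ) + 1) ^ 2)⁻¹ :=
        Finset.prod_le_prod (fun _ _ => by positivity) fun i _ =>
          inv_anti₀ (by positivity)
            (pow_le_pow_left₀ (by positivity) (coord_add_one_le_weight k i) 2)

end Weight

lemma abs_hermiteFnD_le {d : ℕ} (k : Fin d → ℕ) (x : Space d) :
    |hermiteFnD k x| ≤ 2 ^ d * weight k ^ d := by
  calc |hermiteFnD k x| = ∏ i, |hermiteFn (k i) (x i)| := Finset.abs_prod _ _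
    _ ≤ ∏ _i : Fin d, 2 * weight k :=
        Finset.prod_le_prod (fun _ _ => abs_nonneg _) fun i _ =>
          (abs_hermiteFn_le _ _).trans (by linarith [coord_add_one_le_weight k i])
    _ = 2 ^ d * weight k ^ d := by simp [mul_pow]

/-- The Schwartz space `S(ℝ^d)` of real-valued functions. -/
abbrev SchwartzSpace (d : ℕ) := SchwartzMap (Space d) ℝ

section HermiteCoefficients

variable {d : ℕ}

/-- The Hermite function `h_k` as an element of `L²(ℝ^d)`. -/
noncomputable def hermiteLp (k : Fin d → ℕ) : Lp ℝ 2 (volume : Measure (Space d)) :=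
  (memLp_hermiteFnD k).toLp

lemma orthonormal_hermiteLp : Orthonormal ℝ (hermiteLp (d := d)) := by
  classical
  rw [orthonormal_iff_ite]
  intro j k
  rw [L2.inner_def, ← integral_hermiteFnD_mul j k]
  refine integral_congr_ae ?_
  filter_upwards [(memLp_hermiteFnD j).coeFn_toLp, (memLp_hermiteFnD k).coeFn_toLp] with x hj hk
  simp [hermiteLp, hj, hk, mul_comm]

/-- The functional `φ ↦ (φ, h_k)_{L²}` as a continuous linear map on Schwartz space. -/
noncomputable def hermiteCoeffCLM (k : Fin d → ℕ) : SchwartzSpace d →L[ℝ] ℝ :=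
  (innerSL ℝ (hermiteLp k)).comp (SchwartzMap.toLpCLM ℝ ℝ 2 volume)

lemma hermiteCoeffCLM_apply (k : Fin d → ℕ) (φ : SchwartzSpace d) :
    hermiteCoeffCLM k φ = hermiteCoeff φ k := by
  change inner ℝ (hermiteLp k) (φ.toLp 2) = _
  rw [L2.inner_def]
  refine integral_congr_ae ?_
  filter_upwards [(memLp_hermiteFnD k).coeFn_toLp, φ.coeFn_toLp 2] with x hk hφ
  simp [hermiteLp, hk, hφ]

lemma inner_hermiteLp_toLp (k : Fin d → ℕ) (φ : SchwartzSpace d) :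
    inner ℝ (hermiteLp k) (φ.toLp 2) = hermiteCoeff φ k :=
  hermiteCoeffCLM_apply k φ

lemma summable_hermiteCoeff_sq (φ : SchwartzSpace d) :
    Summable fun k => hermiteCoeff φ k ^ 2 := by
  simpa only [inner_hermiteLp_toLp, Real.norm_eq_abs, sq_abs] using
    orthonormal_hermiteLp.inner_products_summable (φ.toLp 2 volume)

lemma tsum_hermiteCoeff_sq_le (φ : SchwartzSpace d) :
    ∑' k, hermiteCoeff φ k ^ 2 ≤ ‖φ.toLp 2‖ ^ 2 := by
  simpa only [inner_hermiteLp_toLp, Real.norm_eq_abs, sq_abs] using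
    orthonormal_hermiteLp.tsum_inner_products_le (φ.toLp 2 volume)

lemma integrable_mul_hermiteFnD (φ : SchwartzSpace d) (k : Fin d → ℕ) :
    Integrable fun x => φ x * hermiteFnD k x :=
  (φ.memLp 2).integrable_mul (memLp_hermiteFnD k)

end HermiteCoefficients

section Operators

variable {d : ℕ}

/-- Multiplication by the coordinate `x_i` on Schwartz space. -/
noncomputable def mulCoord (i : Fin d) : SchwartzSpace d →L[ℝ] SchwartzSpace d :=
  SchwartzMap.smulLeftCLM ℝ fun x : Space d => x i

/-- The partial derivative `∂_i` on Schwartz space. -/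
noncomputable def partialDeriv (i : Fin d) : SchwartzSpace d →L[ℝ] SchwartzSpace d :=
  LineDeriv.lineDerivOpCLM ℝ (SchwartzSpace d) (EuclideanSpace.single i (1 : ℝ))

lemma mulCoord_apply (i : Fin d) (φ : SchwartzSpace d) (x : Space d) :
    mulCoord i φ x = x i * φ x :=
  SchwartzMap.smulLeftCLM_apply_apply (EuclideanSpace.proj (𝕜 := ℝ) i).hasTemperateGrowth φ x

lemma partialDeriv_apply (i : Fin d) (φ : SchwartzSpace d) (x : Space d) :
    partialDeriv i φ x = fderiv ℝ φ x (EuclideanSpace.single i 1) :=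
  SchwartzMap.lineDerivOp_apply_eq_fderiv _ _ _

lemma hermiteCoeff_mulCoord (i : Fin d) (φ : SchwartzSpace d) (k : Fin d → ℕ) :
    hermiteCoeff (mulCoord i φ) k =
      √(k i + 1) * hermiteCoeff φ (k + Pi.single i 1) +
        √(k i) * hermiteCoeff φ (k - Pi.single i 1) := by
  unfold hermiteCoeff
  rw [← integral_const_mul, ← integral_const_mul,
    ← integral_add ((integrable_mul_hermiteFnD φ _).const_mul _)
      ((integrable_mul_hermiteFnD φ _).const_mul _)]
  refine integral_congr_ae (.of_forall fun x => ?_)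
  simp only [mulCoord_apply]
  linear_combination φ x * coord_mul_hermiteFnD i k x

lemma hermiteCoeff_partialDeriv (i : Fin d) (φ : SchwartzSpace d) (k : Fin d → ℕ) :
    hermiteCoeff (partialDeriv i φ) k =
      (√(k i + 1) * hermiteCoeff φ (k + Pi.single i 1) -
        √(k i) * hermiteCoeff φ (k - Pi.single i 1)) / 2 := by
  have hdown := (integrable_mul_hermiteFnD φ (k - Pi.single i 1)).const_mul √(k i)
  have hup := (integrable_mul_hermiteFnD φ (k + Pi.single i 1)).const_mul √(k i + 1)
  have hderiv (x : Space d) : φ x * fderiv ℝ (hermiteFnD k) x (EuclideanSpace.single i 1) =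
      (√(k i) * (φ x * hermiteFnD (k - Pi.single i 1) x) -
        √(k i + 1) * (φ x * hermiteFnD (k + Pi.single i 1) x)) / 2 := by
    rw [fderiv_hermiteFnD_single]
    ring
  have hparts := integral_mul_fderiv_eq_neg_fderiv_mul_of_integrable
    (μ := (volume : Measure (Space d))) (f := φ) (g := hermiteFnD k)
    (v := EuclideanSpace.single i 1)
    (by simpa only [partialDeriv_apply] using integrable_mul_hermiteFnD (partialDeriv i φ) k)
    (by simp_rw [hderiv]; exact (hdown.sub hup).div_const 2) (integrable_mul_hermiteFnD φ k)
    (fun x _ => φ.differentiableAt) (fun x _ => differentiable_hermiteFnD k x)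
  simp only [hderiv, ← partialDeriv_apply] at hparts
  rw [integral_div, integral_sub hdown hup, integral_const_mul, integral_const_mul] at hparts
  unfold hermiteCoeff
  linarith

/-- The annihilation operator `a_i = x_i / 2 + ∂_i`. -/
noncomputable def annihilation (i : Fin d) : SchwartzSpace d →L[ℝ] SchwartzSpace d :=
  (2⁻¹ : ℝ) • mulCoord i + partialDeriv i

/-- The creation operator `a_i† = x_i / 2 - ∂_i`. -/
noncomputable def creation (i : Fin d) : SchwartzSpace d →L[ℝ] SchwartzSpace d :=
  (2⁻¹ : ℝ) • mulCoord i - partialDeriv i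

lemma hermiteCoeff_annihilation (i : Fin d) (φ : SchwartzSpace d) (k : Fin d → ℕ) :
    hermiteCoeff (annihilation i φ) k = √(k i + 1) * hermiteCoeff φ (k + Pi.single i 1) := by
  have h : hermiteCoeff (annihilation i φ) k =
      2⁻¹ * hermiteCoeff (mulCoord i φ) k + hermiteCoeff (partialDeriv i φ) k := by
    simp [← hermiteCoeffCLM_apply, annihilation]
  rw [h, hermiteCoeff_mulCoord, hermiteCoeff_partialDeriv]
  ring

lemma hermiteCoeff_creation (i : Fin d) (φ : SchwartzSpace d) (k : Fin d → ℕ) :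
    hermiteCoeff (creation i φ) k = √(k i) * hermiteCoeff φ (k - Pi.single i 1) := by
  have h : hermiteCoeff (creation i φ) k =
      2⁻¹ * hermiteCoeff (mulCoord i φ) k - hermiteCoeff (partialDeriv i φ) k := by
    simp [← hermiteCoeffCLM_apply, creation]
  rw [h, hermiteCoeff_mulCoord, hermiteCoeff_partialDeriv]
  ring

/-- The number operator, shifted by one so that its eigenvalue on `h_k` is `1 + |k|₁`. -/
noncomputable def numberOp (d : ℕ) : SchwartzSpace d →L[ℝ] SchwartzSpace d :=
  1 + ∑ i, creation i * annihilation i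

lemma hermiteCoeff_creation_annihilation (i : Fin d) (φ : SchwartzSpace d) (k : Fin d → ℕ) :
    hermiteCoeff (creation i (annihilation i φ)) k = k i * hermiteCoeff φ k := by
  rw [hermiteCoeff_creation]
  rcases Nat.eq_zero_or_pos (k i) with hk | hk
  · simp [hk]
  · have hle : Pi.single i 1 ≤ k := update_le_iff.2 ⟨hk, fun j _ => (k j).zero_le⟩
    rw [hermiteCoeff_annihilation, tsub_add_cancel_of_le hle, ← mul_assoc]
    simp [Nat.cast_sub hk]

lemma hermiteCoeff_numberOp (φ : SchwartzSpace d) (k : Fin d → ℕ) :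
    hermiteCoeff (numberOp d φ) k = weight k * hermiteCoeff φ k := by
  have h : hermiteCoeff (numberOp d φ) k =
      hermiteCoeff φ k + ∑ i, hermiteCoeff (creation i (annihilation i φ)) k := by
    simp [← hermiteCoeffCLM_apply, numberOp]
  simp only [h, hermiteCoeff_creation_annihilation, weight, add_mul, one_mul, Finset.sum_mul]

lemma hermiteCoeff_numberOp_pow (n : ℕ) (φ : SchwartzSpace d) (k : Fin d → ℕ) :
    hermiteCoeff ((numberOp d ^ n) φ) k = weight k ^ n * hermiteCoeff φ k := by
  induction n with
  | zero => simp
  | succ n ih =>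
    rw [pow_succ', mul_apply_eq_comp, hermiteCoeff_numberOp, ih, pow_succ', mul_assoc]

end Operators

section SobolevNorm

variable {d : ℕ}

lemma one_add_sum_sq_le_weight_sq {ι : Type*} [Fintype ι] (k : ι → ℕ) :
    1 + ∑ i, (k i : ℝ) ^ 2 ≤ weight k ^ 2 := by
  have h := Finset.sum_sq_le_sq_sum_of_nonneg (s := Finset.univ) (f := fun i => (k i : ℝ))
    fun i _ => (k i).cast_nonneg
  have h0 : 0 ≤ ∑ i, (k i : ℝ) := Finset.sum_nonneg fun i _ => (k i).cast_nonneg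
  rw [weight]
  nlinarith

lemma sobolevWeight_le_weight_pow (p : ℕ) (k : Fin d → ℕ) :
    (1 + ∑ i, (k i : ℝ) ^ 2) ^ ((p : ℝ) / (2 * d)) ≤ weight k ^ p := by
  have hbase : 1 ≤ 1 + ∑ i, (k i : ℝ) ^ 2 :=
    le_add_of_nonneg_right (Finset.sum_nonneg fun i _ => sq_nonneg _)
  have hexp : (p : ℝ) / (2 * d) ≤ p / 2 := by
    rcases Nat.eq_zero_or_pos d with rfl | hd
    · simp [div_nonneg]
    · have : (1 : ℝ) ≤ d := Nat.one_le_cast.2 hd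
      gcongr
      linarith
  calc (1 + ∑ i, (k i : ℝ) ^ 2) ^ ((p : ℝ) / (2 * d))
      ≤ (weight k ^ 2) ^ ((p : ℝ) / 2) :=
        (Real.rpow_le_rpow_of_exponent_le hbase hexp).trans
          (Real.rpow_le_rpow (by linarith) (one_add_sum_sq_le_weight_sq k) (by positivity))
    _ = weight k ^ p := by
        rw [← Real.rpow_natCast_mul (weight_pos k).le, Nat.cast_ofNat,
          mul_div_cancel₀ _ two_ne_zero, Real.rpow_natCast]

lemma sobolev_term_le (p : ℕ) (φ : SchwartzSpace d) (k : Fin d → ℕ) :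
    ((1 + ∑ i, (k i : ℝ) ^ 2) ^ ((p : ℝ) / (2 * d)) * hermiteCoeff φ k) ^ 2 ≤
      hermiteCoeff ((numberOp d ^ p) φ) k ^ 2 := by
  rw [hermiteCoeff_numberOp_pow, mul_pow, mul_pow]
  gcongr
  exact sobolevWeight_le_weight_pow p k

lemma summable_sobolev_term (p : ℕ) (φ : SchwartzSpace d) :
    Summable fun k : Fin d → ℕ =>
      ((1 + ∑ i, (k i : ℝ) ^ 2) ^ ((p : ℝ) / (2 * d)) * hermiteCoeff φ k) ^ 2 :=
  .of_nonneg_of_le (fun _ => sq_nonneg _) (sobolev_term_le p φ) (summable_hermiteCoeff_sq _)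

lemma hermiteSobolevNorm_le_norm_toLp (p : ℕ) (φ : SchwartzSpace d) :
    hermiteSobolevNorm p φ ≤ ‖((numberOp d ^ p) φ).toLp 2‖ := by
  refine Real.sqrt_le_iff.2 ⟨norm_nonneg _, ?_⟩
  exact ((summable_sobolev_term p φ).tsum_le_tsum (sobolev_term_le p φ)
    (summable_hermiteCoeff_sq _)).trans (tsum_hermiteCoeff_sq_le _)

lemma exists_hermiteSobolevNorm_le_seminorm (p : ℕ) :
    ∃ (s : Finset (ℕ × ℕ)) (C : ℝ), 0 ≤ C ∧ ∀ φ : SchwartzSpace d,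
      hermiteSobolevNorm p φ ≤ C * s.sup (schwartzSeminormFamily ℝ (Space d) ℝ) φ := by
  let T : SchwartzSpace d →L[ℝ] Lp ℝ 2 (volume : Measure (Space d)) :=
    (SchwartzMap.toLpCLM ℝ ℝ 2 volume).comp (numberOp d ^ p)
  obtain ⟨s, C, -, hC⟩ := Seminorm.bound_of_continuous (schwartz_withSeminorms ℝ (Space d) ℝ)
    ((normSeminorm ℝ _).comp T.toLinearMap) (continuous_norm.comp T.continuous)
  exact ⟨s, C, C.coe_nonneg, fun φ => (hermiteSobolevNorm_le_norm_toLp p φ).trans (hC φ)⟩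

end SobolevNorm

section Completeness

section Moments

lemma hasSum_integral_pow_div_factorial_mul {α : Type*} [MeasurableSpace α] {μ : Measure α}
    {u g : α → ℂ} (hu : AEStronglyMeasurable u μ) (hg : AEStronglyMeasurable g μ)
    (hint : Integrable (fun x => Real.exp ‖u x‖ * ‖g x‖) μ) :
    HasSum (fun n : ℕ => ∫ x, u x ^ n / n.factorial * g x ∂μ)
      (∫ x, Complex.exp (u x) * g x ∂μ) := by
  have hbound (x : α) : HasSum (fun n : ℕ => ‖u x‖ ^ n / n.factorial * ‖g x‖)
      (Real.exp ‖u x‖ * ‖g x‖) := by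
    rw [Real.exp_eq_exp_ℝ]
    exact (NormedSpace.expSeries_div_hasSum_exp ‖u x‖).mul_right _
  have hexp (x : α) : HasSum (fun n : ℕ => u x ^ n / n.factorial * g x)
      (Complex.exp (u x) * g x) := by
    rw [Complex.exp_eq_exp_ℂ]
    exact (NormedSpace.expSeries_div_hasSum_exp (u x)).mul_right _
  refine hasSum_integral_of_dominated_convergence
    (fun n x => ‖u x‖ ^ n / n.factorial * ‖g x‖)
    (fun n => ((hu.pow n).mul_const (n.factorial : ℂ)⁻¹).mul hg)
    (fun n => .of_forall fun x => by simp) (.of_forall fun x => (hbound x).summable) ?_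
    (.of_forall hexp)
  simpa only [(hbound _).tsum_eq] using hint

variable {E : Type*} [NormedAddCommGroup E] [InnerProductSpace ℝ E] [FiniteDimensional ℝ E]
  [MeasurableSpace E] [BorelSpace E]

open FourierTransform

lemma integrable_exp_norm_mul_norm_ofReal {u : E → ℂ} (hu : Continuous u) {c : ℝ}
    (huc : ∀ x, ‖u x‖ ≤ c * ‖x‖) {g : E → ℝ} (hg : AEStronglyMeasurable g)
    (hexp : Integrable fun x => Real.exp (c * ‖x‖) * g x) :
    Integrable fun x => Real.exp ‖u x‖ * ‖(g x : ℂ)‖ := by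
  refine hexp.mono ((Real.continuous_exp.comp hu.norm).aestronglyMeasurable.mul
    (Complex.continuous_ofReal.comp_aestronglyMeasurable hg).norm) (.of_forall fun x => ?_)
  rw [norm_mul (Real.exp _) (g x), Real.norm_of_nonneg (Real.exp_pos _).le,
    Real.norm_of_nonneg (by positivity), Complex.norm_real]
  gcongr
  exact huc x

lemma fourier_eq_zero_of_integral_inner_pow_eq_zero {g : E → ℝ}
    (hexp : ∀ c : ℝ, Integrable fun x => Real.exp (c * ‖x‖) * g x) {y : E}
    (hmom : ∀ n : ℕ, ∫ x, inner ℝ x y ^ n * g x = 0) : 𝓕 (fun x => (g x : ℂ)) y = 0 := by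
  have hmeas : AEStronglyMeasurable g := by simpa using (hexp 0).aestronglyMeasurable
  have hcont : Continuous fun x : E => ((-2 * Real.pi * inner ℝ x y : ℝ) : ℂ) * Complex.I := by
    fun_prop
  have hnorm (x : E) :
      ‖((-2 * Real.pi * inner ℝ x y : ℝ) : ℂ) * Complex.I‖ ≤ 2 * Real.pi * ‖y‖ * ‖x‖ := by
    calc ‖((-2 * Real.pi * inner ℝ x y : ℝ) : ℂ) * Complex.I‖
        = 2 * Real.pi * |inner ℝ x y| := by simp [abs_of_pos Real.pi_pos]
      _ ≤ 2 * Real.pi * (‖x‖ * ‖y‖) := by gcongr; exact abs_real_inner_le_norm x y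
      _ = 2 * Real.pi * ‖y‖ * ‖x‖ := by ring
  have hsum := hasSum_integral_pow_div_factorial_mul hcont.aestronglyMeasurable
    (Complex.continuous_ofReal.comp_aestronglyMeasurable hmeas)
    (integrable_exp_norm_mul_norm_ofReal hcont hnorm hmeas (hexp _))
  have hterm (n : ℕ) : ∫ x, (((-2 * Real.pi * inner ℝ x y : ℝ) : ℂ) * Complex.I) ^ n /
      n.factorial * (g x : ℂ) = 0 := by
    have h (x : E) : (((-2 * Real.pi * inner ℝ x y : ℝ) : ℂ) * Complex.I) ^ n / n.factorial *
        (g x : ℂ) = ((-2 * Real.pi) * Complex.I) ^ n / n.factorial *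
          ((inner ℝ x y ^ n * g x : ℝ) : ℂ) := by
      push_cast
      ring
    simp_rw [h]
    rw [integral_const_mul, integral_complex_ofReal, hmom, Complex.ofReal_zero, mul_zero]
  rw [Real.fourier_eq']
  exact hsum.unique (by simpa only [hterm] using hasSum_zero)

lemma eq_zero_of_integral_inner_pow_eq_zero {g : E → ℝ} (hg : Continuous g)
    (hexp : ∀ c : ℝ, Integrable fun x => Real.exp (c * ‖x‖) * g x)
    (hmom : ∀ (y : E) (n : ℕ), ∫ x, inner ℝ x y ^ n * g x = 0) : g = 0 := by
  have hfourier : 𝓕 (fun x => (g x : ℂ)) = 0 :=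
    funext fun y => fourier_eq_zero_of_integral_inner_pow_eq_zero hexp (hmom y)
  have hint : Integrable fun x => (g x : ℂ) := by simpa using (hexp 0).ofReal (𝕜 := ℂ)
  have hinv := (Complex.continuous_ofReal.comp hg).fourierInv_fourier_eq hint
    (by simp [Function.comp_def, hfourier])
  ext x
  have hx := congrFun hinv x
  simp only [Function.comp_def, hfourier, Real.fourierInv_eq', Pi.zero_apply, smul_zero,
    integral_zero] at hx
  exact_mod_cast hx.symm

end Moments

variable {d : ℕ}

lemma sqrt_gaussD_eq (x : ℝ) : √(gaussD x) = √(gaussD 0) * Real.exp (-(1 / 4) * x ^ 2) := by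
  have h : gaussD x = gaussD 0 * Real.exp (-(1 / 4) * x ^ 2) ^ 2 := by
    have hexp : Real.exp (-(x ^ 2) / 2) = Real.exp (-(1 / 4) * x ^ 2) ^ 2 := by
      rw [← Real.exp_nat_mul]
      ring_nf
    simp [gaussD, hexp]
  rw [h, Real.sqrt_mul (gaussD_pos 0).le, Real.sqrt_sq (Real.exp_pos _).le]

lemma integrable_hermiteFn (k : ℕ) : Integrable (hermiteFn k) := by
  refine ((integrable_aeval_mul_exp_neg_mul_sq (Polynomial.hermite k)
    (b := 1 / 4) (by norm_num)).const_mul (√(gaussD 0) / √k.factorial)).congr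
    (.of_forall fun x => ?_)
  rw [hermiteFn_eq, sqrt_gaussD_eq x]
  ring

lemma integrable_hermiteFnD (k : Fin d → ℕ) : Integrable (hermiteFnD k) :=
  integrable_prod_coord fun i => integrable_hermiteFn (k i)

lemma hermiteFnD_zero_eq (x : Space d) :
    hermiteFnD 0 x = hermiteFnD 0 (0 : Space d) * Real.exp (-(1 / 4) * ‖x‖ ^ 2) := by
  simp only [hermiteFnD, Pi.zero_apply, hermiteFn_zero, PiLp.zero_apply]
  rw [EuclideanSpace.real_norm_sq_eq, Finset.mul_sum, Real.exp_sum, ← Finset.prod_mul_distrib]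
  exact Finset.prod_congr rfl fun i _ => sqrt_gaussD_eq (x i)

lemma integrable_exp_neg_mul_norm_sq {b : ℝ} (hb : 0 < b) :
    Integrable fun x : Space d => Real.exp (-b * ‖x‖ ^ 2) := by
  simpa only [EuclideanSpace.real_norm_sq_eq, Finset.mul_sum, Real.exp_sum] using
    integrable_prod_coord fun _ : Fin d => integrable_exp_neg_mul_sq hb

lemma integrable_exp_mul_norm_mul_hermiteFnD_zero (c : ℝ) :
    Integrable fun x : Space d => Real.exp (c * ‖x‖) * hermiteFnD 0 x := by
  refine ((integrable_exp_neg_mul_norm_sq (b := 1 / 8) (by norm_num)).const_mul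
    (hermiteFnD 0 (0 : Space d) * Real.exp (2 * c ^ 2))).mono' (by fun_prop) ?_
  refine .of_forall fun x => ?_
  rw [Real.norm_of_nonneg (mul_nonneg (Real.exp_pos _).le (hermiteFnD_zero_pos x).le),
    hermiteFnD_zero_eq, mul_left_comm, mul_assoc, ← Real.exp_add, ← Real.exp_add]
  refine mul_le_mul_of_nonneg_left (Real.exp_le_exp.2 ?_) (hermiteFnD_zero_pos 0).le
  linarith [sq_nonneg (4 * c - ‖x‖)]

lemma integrable_and_integral_inner_pow_mul_eq_zero {f : Space d → ℝ}
    (hint : ∀ k, Integrable fun x => f x * hermiteFnD k x)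
    (hcoeff : ∀ k, ∫ x, f x * hermiteFnD k x = 0) (y : Space d) (n : ℕ) (k : Fin d → ℕ) :
    Integrable (fun x => inner ℝ x y ^ n * (f x * hermiteFnD k x)) ∧
      ∫ x, inner ℝ x y ^ n * (f x * hermiteFnD k x) = 0 := by
  induction n generalizing k with
  | zero => simpa using ⟨hint k, hcoeff k⟩
  | succ n ih =>
    have hexpand (x : Space d) : inner ℝ x y ^ (n + 1) * (f x * hermiteFnD k x) =
        ∑ i, (y i * √(k i + 1) *
            (inner ℝ x y ^ n * (f x * hermiteFnD (k + Pi.single i 1) x)) +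
          y i * √(k i) * (inner ℝ x y ^ n * (f x * hermiteFnD (k - Pi.single i 1) x))) := by
      have hinner : inner ℝ x y = ∑ i, y i * x i := by simp [PiLp.inner_apply]
      rw [pow_succ, mul_assoc]
      nth_rw 2 [hinner]
      rw [Finset.sum_mul, Finset.mul_sum]
      refine Finset.sum_congr rfl fun i _ => ?_
      linear_combination y i * inner ℝ x y ^ n * f x * coord_mul_hermiteFnD i k x
    have hup (i : Fin d) := (ih (k + Pi.single i 1)).1.const_mul (y i * √(k i + 1))
    have hdown (i : Fin d) := (ih (k - Pi.single i 1)).1.const_mul (y i * √(k i))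
    have hadd (i : Fin d) : Integrable fun x => y i * √(k i + 1) *
          (inner ℝ x y ^ n * (f x * hermiteFnD (k + Pi.single i 1) x)) +
        y i * √(k i) * (inner ℝ x y ^ n * (f x * hermiteFnD (k - Pi.single i 1) x)) :=
      (hup i).add (hdown i)
    simp_rw [hexpand]
    refine ⟨integrable_finsetSum _ fun i _ => hadd i, ?_⟩
    rw [integral_finsetSum _ fun i _ => hadd i]
    refine Finset.sum_eq_zero fun i _ => ?_
    rw [integral_add (hup i) (hdown i), integral_const_mul, integral_const_mul, (ih _).2,
      (ih _).2, mul_zero, mul_zero, add_zero]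

open BoundedContinuousFunction

lemma integrable_boundedContinuousFunction_mul (f : Space d →ᵇ ℝ) {g : Space d → ℝ}
    (hg : Integrable g) : Integrable fun x => f x * g x :=
  hg.bdd_mul (c := ‖f‖) f.continuous.aestronglyMeasurable (.of_forall f.norm_coe_le_norm)

lemma boundedContinuousFunction_eq_zero_of_integral_mul_hermiteFnD (f : Space d →ᵇ ℝ)
    (hf : ∀ k, ∫ x, f x * hermiteFnD k x = 0) : f = 0 := by
  have hzero : (fun x => f x * hermiteFnD 0 x) = 0 := by
    refine eq_zero_of_integral_inner_pow_eq_zero (by fun_prop) (fun c => ?_) fun y n =>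
      (integrable_and_integral_inner_pow_mul_eq_zero
        (fun k => integrable_boundedContinuousFunction_mul f (integrable_hermiteFnD k)) hf y n 0).2
    simpa only [mul_left_comm] using integrable_boundedContinuousFunction_mul f
      (integrable_exp_mul_norm_mul_hermiteFnD_zero c)
  ext x
  exact (mul_eq_zero.1 (congrFun hzero x)).resolve_right (hermiteFnD_zero_pos x).ne'

end Completeness

section UniformExpansion

open BoundedContinuousFunction

variable {d : ℕ}

/-- The Hermite function `h_k` as an element of the Banach space of bounded continuous functions,
where the Hermite expansion of a Schwartz function is summed. -/
noncomputable def hermiteBCF (k : Fin d → ℕ) : Space d →ᵇ ℝ :=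
  .ofNormedAddCommGroup (hermiteFnD k) (continuous_hermiteFnD k) (2 ^ d * weight k ^ d)
    (abs_hermiteFnD_le k)

lemma norm_hermiteBCF_le (k : Fin d → ℕ) : ‖hermiteBCF k‖ ≤ 2 ^ d * weight k ^ d :=
  norm_ofNormedAddCommGroup_le _ (mul_nonneg (by positivity) (pow_nonneg (weight_pos k).le d))
    (abs_hermiteFnD_le k)

/-- The functional `f ↦ ∫ f h_k` on bounded continuous functions. -/
noncomputable def bcfHermiteCoeff (k : Fin d → ℕ) : (Space d →ᵇ ℝ) →L[ℝ] ℝ :=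
  LinearMap.mkContinuous
    { toFun := fun f => ∫ x, f x * hermiteFnD k x
      map_add' := fun f g => by
        simp only [BoundedContinuousFunction.add_apply, add_mul]
        exact integral_add (integrable_boundedContinuousFunction_mul f (integrable_hermiteFnD k))
          (integrable_boundedContinuousFunction_mul g (integrable_hermiteFnD k))
      map_smul' := fun c f => by
        simp [mul_assoc, integral_const_mul] }
    (∫ x, ‖hermiteFnD k x‖) fun f => by
      rw [mul_comm, ← integral_const_mul]
      refine norm_integral_le_of_norm_le ((integrable_hermiteFnD k).norm.const_mul _)
        (.of_forall fun x => ?_)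
      rw [norm_mul]
      gcongr
      exact f.norm_coe_le_norm x

lemma bcfHermiteCoeff_apply (k : Fin d → ℕ) (f : Space d →ᵇ ℝ) :
    bcfHermiteCoeff k f = ∫ x, f x * hermiteFnD k x := rfl

lemma bcfHermiteCoeff_tsum_smul_hermiteBCF {c : (Fin d → ℕ) → ℝ}
    (hc : Summable fun k => c k • hermiteBCF k) (j : Fin d → ℕ) :
    bcfHermiteCoeff j (∑' k, c k • hermiteBCF k) = c j := by
  classical
  have hterm (k : Fin d → ℕ) :
      bcfHermiteCoeff j (c k • hermiteBCF k) = if k = j then c j else 0 := by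
    rw [map_smul, bcfHermiteCoeff_apply, smul_eq_mul]
    refine (congrArg _ (integral_hermiteFnD_mul k j)).trans ?_
    split_ifs with h <;> simp [h]
  rw [(bcfHermiteCoeff j).map_tsum hc]
  simp_rw [hterm]
  exact tsum_ite_eq j _

/-- The constant relating the sup norm of a function to its Hermite coefficients weighted by
`weight k ^ (3 * d)`, of which `d` powers absorb `‖h_k‖_∞` and `2 * d` make the sum converge. -/
noncomputable def supBound (d : ℕ) : ℝ := 2 ^ d * ∑' k : Fin d → ℕ, (weight k ^ (2 * d))⁻¹

lemma supBound_nonneg (d : ℕ) : 0 ≤ supBound d :=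
  mul_nonneg (by positivity)
    (tsum_nonneg fun k => inv_nonneg.2 (pow_nonneg (weight_pos k).le _))

lemma norm_smul_hermiteBCF_le {c B : ℝ} {k : Fin d → ℕ} (hc : weight k ^ (3 * d) * |c| ≤ B) :
    ‖c • hermiteBCF k‖ ≤ 2 ^ d * B * (weight k ^ (2 * d))⁻¹ := by
  have hw := weight_pos k
  rw [norm_smul, Real.norm_eq_abs, ← div_eq_mul_inv, le_div_iff₀ (by positivity)]
  calc |c| * ‖hermiteBCF k‖ * weight k ^ (2 * d)
      ≤ |c| * (2 ^ d * weight k ^ d) * weight k ^ (2 * d) := by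
        gcongr
        exact norm_hermiteBCF_le k
    _ = 2 ^ d * (weight k ^ (3 * d) * |c|) := by ring
    _ ≤ 2 ^ d * B := by gcongr

lemma tsum_hermiteCoeff_smul_hermiteBCF (φ : SchwartzSpace d)
    (hφ : Summable fun k => hermiteCoeff φ k • hermiteBCF k) :
    ∑' k, hermiteCoeff φ k • hermiteBCF k = φ.toBoundedContinuousFunction := by
  refine (sub_eq_zero.1 (boundedContinuousFunction_eq_zero_of_integral_mul_hermiteFnD _
    fun j => ?_)).symm
  rw [← bcfHermiteCoeff_apply, map_sub, bcfHermiteCoeff_tsum_smul_hermiteBCF hφ]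
  exact sub_self _

lemma abs_le_supBound_mul {φ : SchwartzSpace d} {B : ℝ}
    (hφ : ∀ k, weight k ^ (3 * d) * |hermiteCoeff φ k| ≤ B) (x : Space d) :
    |φ x| ≤ supBound d * B := by
  have hbound : HasSum (fun k : Fin d → ℕ => 2 ^ d * B * (weight k ^ (2 * d))⁻¹)
      (supBound d * B) := by
    have hs : Summable fun k : Fin d → ℕ => (weight k ^ (2 * d))⁻¹ := by
      simpa using summable_inv_weight_pow (ι := Fin d)
    rw [supBound, mul_right_comm]
    exact hs.hasSum.mul_left _
  have hle (k : Fin d → ℕ) := norm_smul_hermiteBCF_le (hφ k)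
  calc |φ x| ≤ ‖φ.toBoundedContinuousFunction‖ := φ.toBoundedContinuousFunction.norm_coe_le_norm x
    _ ≤ supBound d * B := by
      rw [← tsum_hermiteCoeff_smul_hermiteBCF φ (.of_norm_bounded hbound.summable hle)]
      exact tsum_of_norm_bounded hbound hle

end UniformExpansion

section CoefficientDecay

variable {d : ℕ}

/-- The Hermite coefficients of `φ` decay at order `n` with constant `B`. -/
def HasCoeffDecay (n : ℕ) (φ : SchwartzSpace d) (B : ℝ) : Prop :=
  ∀ k, weight k ^ n * |hermiteCoeff φ k| ≤ B

lemma HasCoeffDecay.nonneg {n : ℕ} {φ : SchwartzSpace d} {B : ℝ} (h : HasCoeffDecay n φ B) :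
    0 ≤ B :=
  (mul_nonneg (pow_nonneg (weight_pos 0).le n) (abs_nonneg _)).trans (h 0)

lemma HasCoeffDecay.mono {m n : ℕ} (hmn : m ≤ n) {φ : SchwartzSpace d} {B : ℝ}
    (h : HasCoeffDecay n φ B) : HasCoeffDecay m φ B := fun k =>
  (mul_le_mul_of_nonneg_right (pow_le_pow_right₀ (one_le_weight k) hmn) (abs_nonneg _)).trans (h k)

lemma HasCoeffDecay.add {n : ℕ} {φ ψ : SchwartzSpace d} {A B : ℝ} (hφ : HasCoeffDecay n φ A)
    (hψ : HasCoeffDecay n ψ B) : HasCoeffDecay n (φ + ψ) (A + B) := fun k => by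
  rw [← hermiteCoeffCLM_apply, map_add, hermiteCoeffCLM_apply, hermiteCoeffCLM_apply]
  calc weight k ^ n * |hermiteCoeff φ k + hermiteCoeff ψ k|
      ≤ weight k ^ n * (|hermiteCoeff φ k| + |hermiteCoeff ψ k|) :=
        mul_le_mul_of_nonneg_left (abs_add_le _ _) (pow_nonneg (weight_pos k).le n)
    _ = weight k ^ n * |hermiteCoeff φ k| + weight k ^ n * |hermiteCoeff ψ k| := mul_add ..
    _ ≤ A + B := add_le_add (hφ k) (hψ k)

lemma HasCoeffDecay.smul {n : ℕ} {φ : SchwartzSpace d} {B : ℝ} (h : HasCoeffDecay n φ B) (a : ℝ) :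
    HasCoeffDecay n (a • φ) (|a| * B) := fun k => by
  rw [← hermiteCoeffCLM_apply, map_smul, hermiteCoeffCLM_apply, smul_eq_mul, abs_mul,
    mul_left_comm]
  exact mul_le_mul_of_nonneg_left (h k) (abs_nonneg a)

lemma HasCoeffDecay.annihilation {n : ℕ} {φ : SchwartzSpace d} {B : ℝ}
    (h : HasCoeffDecay (n + 1) φ B) (i : Fin d) :
    HasCoeffDecay n (annihilation i φ) B := fun k => by
  have hk := weight_pos k
  have hsqrt : √((k i : ℝ) + 1) ≤ weight k :=
    (Real.sqrt_le_self_iff.2 (.inr (by simp))).trans (coord_add_one_le_weight k i)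
  have hup : weight k ≤ weight (k + Pi.single i 1) := by
    rw [weight_add_single]
    linarith
  rw [hermiteCoeff_annihilation, abs_mul, abs_of_nonneg (Real.sqrt_nonneg _), ← mul_assoc]
  calc weight k ^ n * √((k i : ℝ) + 1) * |hermiteCoeff φ (k + Pi.single i 1)|
      ≤ weight (k + Pi.single i 1) ^ (n + 1) * |hermiteCoeff φ (k + Pi.single i 1)| := by
        rw [pow_succ]
        have := weight_pos (k + Pi.single i 1)
        gcongr
        exact hsqrt.trans hup
    _ ≤ B := h _

lemma HasCoeffDecay.creation {n : ℕ} {φ : SchwartzSpace d} {B : ℝ}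
    (h : HasCoeffDecay (n + 1) φ B) (i : Fin d) :
    HasCoeffDecay n (creation i φ) (2 ^ (n + 1) * B) := fun k => by
  rw [hermiteCoeff_creation, abs_mul, abs_of_nonneg (Real.sqrt_nonneg _), ← mul_assoc]
  rcases Nat.eq_zero_or_pos (k i) with hki | hki
  · simp [hki, h.nonneg]
  set j := k - Pi.single i 1
  have hkj : k = j + Pi.single i 1 :=
    (tsub_add_cancel_of_le (update_le_iff.2 ⟨hki, fun l _ => (k l).zero_le⟩)).symm
  have hweight : weight k ≤ 2 * weight j := by
    rw [hkj, weight_add_single]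
    linarith [one_le_weight j]
  have hsqrt : √(k i : ℝ) ≤ weight k := by
    refine (Real.sqrt_le_self_iff.2 (.inr (by exact_mod_cast hki))).trans ?_
    linarith [coord_add_one_le_weight k i]
  have hk := weight_pos k
  calc weight k ^ n * √(k i : ℝ) * |hermiteCoeff φ j|
      ≤ (2 * weight j) ^ (n + 1) * |hermiteCoeff φ j| := by
        rw [pow_succ]
        have := weight_pos j
        gcongr
        exact hsqrt.trans hweight
    _ = 2 ^ (n + 1) * (weight j ^ (n + 1) * |hermiteCoeff φ j|) := by ring
    _ ≤ 2 ^ (n + 1) * B := by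
        gcongr
        exact h j

/-- The operators on Schwartz space that are bounded for decay of Hermite coefficients, with a
possible loss in the order. -/
def decayAlgebra (d : ℕ) : Subalgebra ℝ (SchwartzSpace d →L[ℝ] SchwartzSpace d) where
  carrier := {T | ∀ n, ∃ (m : ℕ) (C : ℝ), 0 ≤ C ∧
    ∀ φ B, HasCoeffDecay m φ B → HasCoeffDecay n (T φ) (C * B)}
  mul_mem' {S T} hS hT n := by
    obtain ⟨l, C, hC, hS⟩ := hS n
    obtain ⟨m, C', hC', hT⟩ := hT l
    refine ⟨m, C * C', mul_nonneg hC hC', fun φ B h => ?_⟩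
    rw [mul_assoc]
    exact hS _ _ (hT _ _ h)
  add_mem' {S T} hS hT n := by
    obtain ⟨l, C, hC, hS⟩ := hS n
    obtain ⟨m, C', hC', hT⟩ := hT n
    refine ⟨max l m, C + C', add_nonneg hC hC', fun φ B h => ?_⟩
    rw [add_mul]
    exact (hS _ _ (h.mono (le_max_left l m))).add (hT _ _ (h.mono (le_max_right l m)))
  algebraMap_mem' a n := ⟨n, |a|, abs_nonneg a, fun φ B h => by
    rw [Algebra.algebraMap_eq_smul_one]
    exact h.smul a⟩

lemma annihilation_mem_decayAlgebra (i : Fin d) : annihilation i ∈ decayAlgebra d := fun n =>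
  ⟨n + 1, 1, zero_le_one, fun φ B h => by simpa using h.annihilation i⟩

lemma creation_mem_decayAlgebra (i : Fin d) : creation i ∈ decayAlgebra d := fun n =>
  ⟨n + 1, 2 ^ (n + 1), by positivity, fun φ B h => h.creation i⟩

lemma mulCoord_mem_decayAlgebra (i : Fin d) : mulCoord i ∈ decayAlgebra d := by
  have h : mulCoord i = annihilation i + creation i := by
    rw [annihilation, creation]
    module
  rw [h]
  exact add_mem (annihilation_mem_decayAlgebra i) (creation_mem_decayAlgebra i)

lemma partialDeriv_mem_decayAlgebra (i : Fin d) : partialDeriv i ∈ decayAlgebra d := by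
  have h : partialDeriv i = (2⁻¹ : ℝ) • (annihilation i - creation i) := by
    rw [annihilation, creation]
    module
  rw [h]
  exact Subalgebra.smul_mem _
    (sub_mem (annihilation_mem_decayAlgebra i) (creation_mem_decayAlgebra i)) _

lemma weight_le_one_add_sum_sq {ι : Type*} [Fintype ι] (k : ι → ℕ) :
    weight k ≤ 1 + ∑ i, (k i : ℝ) ^ 2 := by
  unfold weight
  gcongr with i
  exact_mod_cast Nat.le_self_pow two_ne_zero (k i)

lemma weight_pow_le_sobolevWeight (n : ℕ) (k : Fin d → ℕ) :
    weight k ^ n ≤ (1 + ∑ i, (k i : ℝ) ^ 2) ^ (((2 * d * n : ℕ) : ℝ) / (2 * d)) := by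
  rcases Nat.eq_zero_or_pos d with rfl | hd
  · simp [weight]
  · have hexp : ((2 * d * n : ℕ) : ℝ) / (2 * d) = n := by
      push_cast
      field_simp
    rw [hexp, Real.rpow_natCast]
    exact pow_le_pow_left₀ (weight_pos k).le (weight_le_one_add_sum_sq k) n

lemma hasCoeffDecay_hermiteSobolevNorm (n : ℕ) (φ : SchwartzSpace d) :
    HasCoeffDecay n φ (hermiteSobolevNorm (2 * d * n : ℕ) φ) := fun k => by
  have hterm := (summable_sobolev_term (2 * d * n) φ).le_tsum k fun _ _ => sq_nonneg _
  refine (mul_le_mul_of_nonneg_right (weight_pow_le_sobolevWeight n k) (abs_nonneg _)).trans ?_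
  refine Real.le_sqrt_of_sq_le (le_of_eq_of_le ?_ hterm)
  rw [mul_pow, sq_abs, mul_pow]

end CoefficientDecay

section ClassicalSeminorms

lemma mul_prod_map_pow {M ι : Type*} [Monoid M] [DecidableEq ι] {a : ι → M}
    (ha : ∀ i j, Commute (a i) (a j)) {l : List ι} (hl : l.Nodup) {j : ι} (hj : j ∈ l)
    (α : ι → ℕ) :
    a j * (l.map fun i => a i ^ α i).prod =
      (l.map fun i => a i ^ (α + Pi.single j 1 : ι → ℕ) i).prod := by
  induction l with
  | nil => simp at hj
  | cons b l ih =>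
    rw [List.map_cons, List.prod_cons, List.map_cons, List.prod_cons]
    obtain ⟨hb, hl⟩ := List.nodup_cons.1 hl
    rcases eq_or_ne j b with rfl | hjb
    · have htail : (l.map fun i => a i ^ (α + Pi.single j 1 : ι → ℕ) i) =
          l.map fun i => a i ^ α i :=
        List.map_congr_left fun i hi => by simp [ne_of_mem_of_not_mem hi hb]
      rw [htail, ← mul_assoc, ← pow_succ']
      simp
    · rw [← ih hl (List.mem_of_ne_of_mem hjb hj), ← mul_assoc, ← mul_assoc,
        ((ha j b).pow_right (α b)).eq]
      simp [hjb.symm]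

lemma norm_le_card_pow_mul_of_orthonormalBasis {𝕜 ι κ E F : Type*} [RCLike 𝕜] [Fintype ι]
    [Fintype κ] [NormedAddCommGroup E] [InnerProductSpace 𝕜 E] [SeminormedAddCommGroup F]
    [NormedSpace 𝕜 F] (b : OrthonormalBasis ι 𝕜 E)
    (f : ContinuousMultilinearMap 𝕜 (fun _ : κ => E) F) {C : ℝ} (hC : 0 ≤ C)
    (hf : ∀ v : κ → ι, ‖f fun i => b (v i)‖ ≤ C) :
    ‖f‖ ≤ (Fintype.card ι : ℝ) ^ Fintype.card κ * C := by
  classical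
  refine f.opNorm_le_bound (by positivity) fun m => ?_
  have hexpand : f m = ∑ v : κ → ι, (∏ i, b.repr (m i) (v i)) • f fun i => b (v i) := by
    conv_lhs => rw [show m = fun i => ∑ j, b.repr (m i) j • b j from
      funext fun i => (b.sum_repr (m i)).symm]
    rw [ContinuousMultilinearMap.map_sum]
    simp_rw [ContinuousMultilinearMap.map_smul_univ]
  have hcoord (i : κ) (j : ι) : ‖b.repr (m i) j‖ ≤ ‖m i‖ :=
    (PiLp.norm_apply_le _ j).trans_eq (b.repr.norm_map (m i))
  calc ‖f m‖ ≤ ∑ v : κ → ι, ‖(∏ i, b.repr (m i) (v i)) • f fun i => b (v i)‖ := by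
        rw [hexpand]
        exact norm_sum_le _ _
    _ ≤ ∑ _v : κ → ι, (∏ i, ‖m i‖) * C := by
        gcongr with v
        rw [norm_smul, norm_prod]
        gcongr with i
        · exact hcoord i (v i)
        · exact hf v
    _ = (Fintype.card ι : ℝ) ^ Fintype.card κ * C * ∏ i, ‖m i‖ := by
        simp
        ring

variable {d : ℕ}

/-- Multiplication by `1 + |x|²` on Schwartz space. -/
noncomputable def mulOneAddNormSq (d : ℕ) : SchwartzSpace d →L[ℝ] SchwartzSpace d :=
  1 + ∑ i, mulCoord i * mulCoord i

lemma mulOneAddNormSq_apply (φ : SchwartzSpace d) (x : Space d) :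
    mulOneAddNormSq d φ x = (1 + ‖x‖ ^ 2) * φ x := by
  rw [EuclideanSpace.real_norm_sq_eq]
  simp [mulOneAddNormSq, mulCoord_apply, add_mul, Finset.sum_mul, pow_two, mul_assoc]

lemma mulOneAddNormSq_pow_apply (m : ℕ) (φ : SchwartzSpace d) (x : Space d) :
    (mulOneAddNormSq d ^ m) φ x = (1 + ‖x‖ ^ 2) ^ m * φ x := by
  induction m with
  | zero => simp
  | succ m ih =>
    rw [pow_succ', mul_apply_eq_comp, mulOneAddNormSq_apply, ih]
    ring

/-- The multi-index derivative `∂^α` on Schwartz space. -/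
noncomputable def multiDerivOp (α : Fin d → ℕ) : SchwartzSpace d →L[ℝ] SchwartzSpace d :=
  ((List.finRange d).map fun i => partialDeriv i ^ α i).prod

lemma coordDerivPow_eq_partialDeriv_pow (i : Fin d) (n : ℕ) (φ : SchwartzSpace d) :
    coordDerivPow i n φ = (partialDeriv i ^ n) φ := by
  induction n with
  | zero => rfl
  | succ n ih =>
    rw [coordDerivPow, ih, pow_succ', mul_apply_eq_comp]
    exact funext fun x => (partialDeriv_apply i _ x).symm

lemma multiDeriv_eq_multiDerivOp (α : Fin d → ℕ) (φ : SchwartzSpace d) :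
    multiDeriv α φ = multiDerivOp α φ := by
  unfold multiDeriv multiDerivOp
  induction List.finRange d with
  | nil => rfl
  | cons i l ih =>
    rw [List.foldr_cons, ih, coordDerivPow_eq_partialDeriv_pow, List.map_cons, List.prod_cons,
      mul_apply_eq_comp]

open scoped LineDeriv

lemma commute_partialDeriv (i j : Fin d) :
    Commute (partialDeriv (d := d) i) (partialDeriv j) := by
  have h (a b : Fin d) (φ : SchwartzSpace d) (x : Space d) :
      partialDeriv a (partialDeriv b φ) x = iteratedFDeriv ℝ 2 φ x
        ![EuclideanSpace.single a (1 : ℝ), EuclideanSpace.single b (1 : ℝ)] := by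
    rw [← SchwartzMap.iteratedLineDerivOp_eq_iteratedFDeriv,
      LineDeriv.iteratedLineDerivOp_succ_left, LineDeriv.iteratedLineDerivOp_one]
    rfl
  refine ContinuousLinearMap.ext fun φ => SchwartzMap.ext fun x => ?_
  rw [mul_apply_eq_comp, mul_apply_eq_comp, h, h]
  exact ((φ.smooth 2).contDiffAt.isSymmSndFDerivAt (by simp)).iteratedFDeriv_cons

lemma exists_iteratedLineDerivOp_eq_multiDerivOp {n : ℕ} (v : Fin n → Fin d) :
    ∃ α : Fin d → ℕ, ∑ i, α i = n ∧ ∀ φ : SchwartzSpace d,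
      ∂^{fun i => EuclideanSpace.single (v i) (1 : ℝ)} φ = multiDerivOp α φ := by
  induction n with
  | zero => exact ⟨0, by simp, fun φ => by simp [multiDerivOp]⟩
  | succ n ih =>
    obtain ⟨α, hα, h⟩ := ih (Fin.tail v)
    refine ⟨α + Pi.single (v 0) 1, by simp [Finset.sum_add_distrib, hα], fun φ => ?_⟩
    rw [multiDerivOp, ← mul_prod_map_pow commute_partialDeriv (List.nodup_finRange d)
      (List.mem_finRange (v 0)), LineDeriv.iteratedLineDerivOp_succ_left]
    exact congrArg (partialDeriv (v 0)) (h φ)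

lemma finite_multiIndex (d m : ℕ) : Finite {α : Fin d → ℕ // ∑ i, α i ≤ m} :=
  (Set.finite_Iic fun _ : Fin d => m).subset fun α hα i =>
    (Finset.single_le_sum (f := α) (fun _ _ => Nat.zero_le _) (Finset.mem_univ i)).trans hα

lemma rpow_mul_abs_multiDeriv_le (m : ℕ) (α : Fin d → ℕ) (φ : SchwartzSpace d) (x : Space d) :
    (1 + ‖x‖ ^ 2) ^ ((m : ℝ) / 2) * |multiDeriv α φ x| ≤
      |(mulOneAddNormSq d ^ m * multiDerivOp α) φ x| := by
  have hweight : 0 ≤ (1 + ‖x‖ ^ 2) ^ m := by positivity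
  rw [mul_apply_eq_comp, mulOneAddNormSq_pow_apply, multiDeriv_eq_multiDerivOp, abs_mul,
    abs_of_nonneg hweight, ← Real.rpow_natCast (1 + ‖x‖ ^ 2) m]
  gcongr
  · exact le_add_of_nonneg_right (sq_nonneg _)
  · exact _root_.half_le_self m.cast_nonneg

lemma le_schwartzStarSeminorm {m : ℕ} {α : Fin d → ℕ} (hα : ∑ i, α i ≤ m) (φ : SchwartzSpace d)
    (x : Space d) :
    (1 + ‖x‖ ^ 2) ^ ((m : ℝ) / 2) * |multiDeriv α φ x| ≤ schwartzStarSeminorm m φ := by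
  have := finite_multiIndex d m
  have hbdd : BddAbove (Set.range fun x : Space d =>
      (1 + ‖x‖ ^ 2) ^ ((m : ℝ) / 2) * |multiDeriv α φ x|) := by
    refine ⟨SchwartzMap.seminorm ℝ 0 0 ((mulOneAddNormSq d ^ m * multiDerivOp α) φ), ?_⟩
    rintro _ ⟨y, rfl⟩
    exact (rpow_mul_abs_multiDeriv_le m α φ y).trans
      (SchwartzMap.norm_le_seminorm ℝ ((mulOneAddNormSq d ^ m * multiDerivOp α) φ) y)
  exact (le_ciSup hbdd x).trans (le_ciSup (f := fun α : {α : Fin d → ℕ // ∑ i, α i ≤ m} =>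
    ⨆ x : Space d, (1 + ‖x‖ ^ 2) ^ ((m : ℝ) / 2) * |multiDeriv α.1 φ x|)
    (Set.finite_range _).bddAbove ⟨α, hα⟩)

lemma schwartzStarSeminorm_nonneg (m : ℕ) (φ : SchwartzSpace d) : 0 ≤ schwartzStarSeminorm m φ :=
  le_trans (by positivity) (le_schwartzStarSeminorm (α := 0) (by simp) φ 0)

lemma norm_pow_le_one_add_norm_sq_rpow {E : Type*} [SeminormedAddCommGroup E] {k m : ℕ}
    (hk : k ≤ m) (x : E) : ‖x‖ ^ k ≤ (1 + ‖x‖ ^ 2) ^ ((m : ℝ) / 2) := by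
  have hbase : 1 ≤ 1 + ‖x‖ ^ 2 := le_add_of_nonneg_right (sq_nonneg _)
  calc ‖x‖ ^ k = (‖x‖ ^ 2) ^ ((k : ℝ) / 2) := by
        rw [← Real.rpow_natCast_mul (norm_nonneg x), Nat.cast_ofNat, mul_div_cancel₀ _ two_ne_zero,
          Real.rpow_natCast]
    _ ≤ (1 + ‖x‖ ^ 2) ^ ((k : ℝ) / 2) := by
        gcongr
        linarith
    _ ≤ (1 + ‖x‖ ^ 2) ^ ((m : ℝ) / 2) := by gcongr

lemma seminorm_le_schwartzStarSeminorm {k n m : ℕ} (hk : k ≤ m) (hn : n ≤ m)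
    (φ : SchwartzSpace d) :
    SchwartzMap.seminorm ℝ k n φ ≤ d ^ n * schwartzStarSeminorm m φ := by
  have hstar := schwartzStarSeminorm_nonneg m φ
  refine SchwartzMap.seminorm_le_bound ℝ k n φ (by positivity) fun x => ?_
  have hpos : 0 < (1 + ‖x‖ ^ 2) ^ ((m : ℝ) / 2) := by positivity
  have hpartial (v : Fin n → Fin d) :
      ‖iteratedFDeriv ℝ n φ x fun i => EuclideanSpace.basisFun (Fin d) ℝ (v i)‖ ≤
        schwartzStarSeminorm m φ / (1 + ‖x‖ ^ 2) ^ ((m : ℝ) / 2) := by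
    obtain ⟨α, hα, h⟩ := exists_iteratedLineDerivOp_eq_multiDerivOp v
    simp only [EuclideanSpace.basisFun_apply]
    rw [← SchwartzMap.iteratedLineDerivOp_eq_iteratedFDeriv, h, ← multiDeriv_eq_multiDerivOp,
      le_div_iff₀ hpos, mul_comm]
    exact le_schwartzStarSeminorm (hα.le.trans hn) φ x
  have hnorm := norm_le_card_pow_mul_of_orthonormalBasis (EuclideanSpace.basisFun (Fin d) ℝ)
    (iteratedFDeriv ℝ n φ x) (by positivity) hpartial
  rw [Fintype.card_fin, Fintype.card_fin] at hnorm
  calc ‖x‖ ^ k * ‖iteratedFDeriv ℝ n φ x‖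
      ≤ (1 + ‖x‖ ^ 2) ^ ((m : ℝ) / 2) *
          (d ^ n * (schwartzStarSeminorm m φ / (1 + ‖x‖ ^ 2) ^ ((m : ℝ) / 2))) := by
        gcongr
        exact norm_pow_le_one_add_norm_sq_rpow hk x
    _ = d ^ n * schwartzStarSeminorm m φ := by field_simp

lemma exists_sup_schwartzSeminormFamily_le_schwartzStarSeminorm (d : ℕ) (s : Finset (ℕ × ℕ)) :
    ∃ (m : ℕ) (C : ℝ), 0 ≤ C ∧ ∀ φ : SchwartzSpace d,
      s.sup (schwartzSeminormFamily ℝ (Space d) ℝ) φ ≤ C * schwartzStarSeminorm m φ := by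
  refine ⟨∑ q ∈ s, (q.1 + q.2), ∑ q ∈ s, (d : ℝ) ^ q.2, by positivity, fun φ => ?_⟩
  have hstar := schwartzStarSeminorm_nonneg (∑ q ∈ s, (q.1 + q.2)) φ
  refine Seminorm.finset_sup_apply_le (by positivity) fun q hq => ?_
  have horder : q.1 + q.2 ≤ ∑ q ∈ s, (q.1 + q.2) :=
    Finset.single_le_sum (f := fun q : ℕ × ℕ => q.1 + q.2) (fun _ _ => Nat.zero_le _) hq
  refine (seminorm_le_schwartzStarSeminorm ((Nat.le_add_right _ _).trans horder)
    ((Nat.le_add_left _ _).trans horder) φ).trans ?_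
  gcongr
  exact Finset.single_le_sum (f := fun q : ℕ × ℕ => (d : ℝ) ^ q.2)
    (fun _ _ => by positivity) hq

end ClassicalSeminorms

section Comparison

variable {d : ℕ}

lemma multiDerivOp_mem_decayAlgebra (α : Fin d → ℕ) : multiDerivOp α ∈ decayAlgebra d := by
  refine list_prod_mem fun T hT => ?_
  obtain ⟨i, -, rfl⟩ := List.mem_map.1 hT
  exact pow_mem (partialDeriv_mem_decayAlgebra i) _

lemma mulOneAddNormSq_mem_decayAlgebra : mulOneAddNormSq d ∈ decayAlgebra d :=
  add_mem (one_mem _) (sum_mem fun i _ =>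
    mul_mem (mulCoord_mem_decayAlgebra i) (mulCoord_mem_decayAlgebra i))

lemma exists_schwartzStarSeminorm_le_of_hasCoeffDecay (d m : ℕ) :
    ∃ (n : ℕ) (C : ℝ), 0 ≤ C ∧ ∀ (φ : SchwartzSpace d) (B : ℝ), HasCoeffDecay n φ B →
      schwartzStarSeminorm m φ ≤ C * B := by
  have := finite_multiIndex d m
  have := Fintype.ofFinite {α : Fin d → ℕ // ∑ i, α i ≤ m}
  have hmem (α : {α : Fin d → ℕ // ∑ i, α i ≤ m}) :
      mulOneAddNormSq d ^ m * multiDerivOp α.1 ∈ decayAlgebra d :=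
    mul_mem (pow_mem mulOneAddNormSq_mem_decayAlgebra m) (multiDerivOp_mem_decayAlgebra α.1)
  choose n C hC hdecay using fun α => hmem α (3 * d)
  have hK := supBound_nonneg d
  have hsum : 0 ≤ ∑ α, C α := Finset.sum_nonneg fun α _ => hC α
  refine ⟨∑ α, n α, supBound d * ∑ α, C α, by positivity, fun φ B hφ => ?_⟩
  have hB := hφ.nonneg
  refine Real.iSup_le (fun α => Real.iSup_le (fun x => ?_) (by positivity)) (by positivity)
  have hα : HasCoeffDecay (n α) φ B := hφ.mono
    (Finset.single_le_sum (f := n) (fun _ _ => Nat.zero_le _) (Finset.mem_univ α))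
  calc (1 + ‖x‖ ^ 2) ^ ((m : ℝ) / 2) * |multiDeriv α.1 φ x|
      ≤ |(mulOneAddNormSq d ^ m * multiDerivOp α.1) φ x| := rpow_mul_abs_multiDeriv_le m α φ x
    _ ≤ supBound d * (C α * B) := abs_le_supBound_mul (hdecay α φ B hα) x
    _ ≤ supBound d * ((∑ α, C α) * B) := by
        gcongr
        exact Finset.single_le_sum (f := C) (fun α _ => hC α) (Finset.mem_univ α)
    _ = supBound d * (∑ α, C α) * B := (mul_assoc _ _ _).symm

lemma exists_schwartzStarSeminorm_le_hermiteSobolevNorm (d m : ℕ) :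
    ∃ (p : ℕ) (c : ℝ), 0 ≤ c ∧ ∀ φ : SchwartzSpace d,
      schwartzStarSeminorm m φ ≤ c * hermiteSobolevNorm p φ := by
  obtain ⟨n, C, hC, h⟩ := exists_schwartzStarSeminorm_le_of_hasCoeffDecay d m
  exact ⟨2 * d * n, C, hC, fun φ => h φ _ (hasCoeffDecay_hermiteSobolevNorm n φ)⟩

lemma exists_hermiteSobolevNorm_le_schwartzStarSeminorm (d p : ℕ) :
    ∃ (m : ℕ) (c : ℝ), 0 ≤ c ∧ ∀ φ : SchwartzSpace d,
      hermiteSobolevNorm p φ ≤ c * schwartzStarSeminorm m φ := by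
  obtain ⟨s, C, hC, hs⟩ := exists_hermiteSobolevNorm_le_seminorm (d := d) p
  obtain ⟨m, C', hC', hm⟩ := exists_sup_schwartzSeminormFamily_le_schwartzStarSeminorm d s
  refine ⟨m, C * C', mul_nonneg hC hC', fun φ => (hs φ).trans ?_⟩
  rw [mul_assoc]
  exact mul_le_mul_of_nonneg_left (hm φ) hC

end Comparison

end HermiteSobolev

/-- The Hermite–Sobolev seminorms and the classical Schwartz seminorms are equivalent
families on `S(ℝ^d)`: each `‖·‖_m^*` is dominated by some `c_m ‖·‖_{H_p}` and
conversely each `‖·‖_{H_p}` is dominated by some `c_p ‖·‖_m^*`. -/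
theorem stmt_18 {d : ℕ} :
    (∀ m : ℕ, ∃ (p : ℕ) (c : ℝ), 0 ≤ c ∧
      ∀ φ : SchwartzMap (EuclideanSpace ℝ (Fin d)) ℝ,
        schwartzStarSeminorm m φ ≤ c * hermiteSobolevNorm (p : ℝ) φ) ∧
    (∀ p : ℕ, ∃ (m : ℕ) (c : ℝ), 0 ≤ c ∧
      ∀ φ : SchwartzMap (EuclideanSpace ℝ (Fin d)) ℝ,
        hermiteSobolevNorm (p : ℝ) φ ≤ c * schwartzStarSeminorm m φ) :=
  ⟨HermiteSobolev.exists_schwartzStarSeminorm_le_hermiteSobolevNorm d,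
    HermiteSobolev.exists_hermiteSobolevNorm_le_schwartzStarSeminorm d⟩
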